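/- Abstract Lagrange multiplier rule: let X be a Banach space, φ : X → ℝ ∪ {+∞} lower semicontinuous and proper, S ⊆ X closed, and x̄ a minimizer of φ over S. Set R̃ := epi φ ⊆ X × ℝ. Let D_S be a uniform tangent set to S at x̄, D_{S̃} := D_S × [−1, 0], and D_{R̃} a uniform tangent set to R̃ at (x̄, φ(x̄)). If D_{S̃} − D_{R̃} is quasisolid, then there exists (ξ, η) ∈ X* × ℝ with: (i) (ξ, η) ≠ (0, 0); (ii) η ∈ {0, 1}; (iii) ⟨ξ, v⟩ ≤ 0 for all v ∈ D_S; (iv) ⟨ξ, w⟩ + η·s ≥ 0 for all (w, s) ∈ D_{R̃}. -/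

import Mathlib

open Metric Pointwise

/-- `D` is a uniform tangent set to `E` at `e₀` (with the ambient norm). -/
def IsUniformTangentSet {Y : Type*} [NormedAddCommGroup Y] [NormedSpace ℝ Y]
    (E : Set Y) (e₀ : Y) (D : Set Y) : Prop :=
  Bornology.IsBounded D ∧
    ∀ ε > (0:ℝ), ∃ δ > (0:ℝ), ∀ d ∈ D, ∀ e ∈ E, ‖e - e₀‖ ≤ δ →
      ∃ lam > (0:ℝ), ∀ t ∈ Set.Icc (0:ℝ) lam,
        ∃ b : Y, ‖b‖ ≤ 1 ∧ e + t • (d + ε • b) ∈ E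

/-- A set is quasisolid if its closed convex hull has nonempty interior within its closed
affine hull. -/
def Quasisolid {Y : Type*} [NormedAddCommGroup Y] [NormedSpace ℝ Y] (A : Set Y) : Prop :=
  ∃ y₀ ∈ closure (convexHull ℝ A),
    ∃ z ∈ closure (convexHull ℝ ((· - y₀) '' A)), ∃ r > (0:ℝ),
      ((Submodule.span ℝ ((· - y₀) '' A)).topologicalClosure : Set Y) ∩ Metric.ball z r ⊆
        closure (convexHull ℝ ((· - y₀) '' A))

theorem aux_ekeland {Z : Type*} [MetricSpace Z] [CompleteSpace Z] (s : Set Z) (hs : IsClosed s)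
    (f : Z → ℝ) (hf : Continuous f) (m : ℝ) (hm : ∀ z ∈ s, m ≤ f z) (z0 : Z) (hz0 : z0 ∈ s) :
    ∃ z ∈ s, f z + dist z0 z ≤ f z0 ∧ ∀ w ∈ s, f w + dist z w ≤ f z → w = z := by
  have step : ∀ z : s, ∃ w : s, f w + dist (z : Z) w ≤ f z ∧
      ∀ u ∈ s, f u + dist (z : Z) u ≤ f z → 2 * f w - f z ≤ f u := by
    intro z
    by_cases h : ∀ u ∈ s, f u + dist (z : Z) u ≤ f z → f z ≤ f u
    · refine ⟨z, by simp, fun u hu hu' => ?_⟩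
      have := h u hu hu'
      linarith
    · push Not at h
      obtain ⟨u0, hu0, hu0', hlt⟩ := h
      set T : Set ℝ := f '' {u | u ∈ s ∧ f u + dist (z : Z) u ≤ f z} with hT
      have hbdd : BddBelow T := ⟨m, by rintro _ ⟨u, hu, rfl⟩; exact hm u hu.1⟩
      have hmem : f u0 ∈ T := ⟨u0, ⟨hu0, hu0'⟩, rfl⟩
      have hI : sInf T < (sInf T + f z) / 2 := by
        have := csInf_le hbdd hmem
        linarith
      obtain ⟨_, ⟨w, hw, rfl⟩, hw'⟩ := exists_lt_of_csInf_lt ⟨_, hmem⟩ hI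
      refine ⟨⟨w, hw.1⟩, hw.2, fun u hu hu' => ?_⟩
      have : sInf T ≤ f u := csInf_le hbdd ⟨u, ⟨hu, hu'⟩, rfl⟩
      simp only
      linarith
  choose g hg1 hg2 using step
  let x : ℕ → s := fun n => g^[n] ⟨z0, hz0⟩
  have hx : ∀ n, x (n+1) = g (x n) := fun n => Function.iterate_succ_apply' _ _ _
  have hnm : ∀ n k, f (x (n + k)) + dist (x n : Z) (x (n+k)) ≤ f (x n) := by
    intro n k
    induction k with
    | zero => simp
    | succ k ih =>
      have h1 := hg1 (x (n+k))
      rw [← hx] at h1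
      have h2 := dist_triangle (x n : Z) (x (n+k)) (x (n+k+1))
      rw [← add_assoc]
      linarith
  have hanti : Antitone (fun n => f (x n)) := antitone_nat_of_succ_le fun n => by
    have := hnm n 1
    have h2 := dist_nonneg (x := (x n : Z)) (y := x (n+1))
    linarith
  have hbdd : BddBelow (Set.range fun n => f (x n)) :=
    ⟨m, by rintro _ ⟨n, rfl⟩; exact hm _ (x n).2⟩
  have hlim := tendsto_atTop_ciInf hanti hbdd
  set L := ⨅ n, f (x n) with hL
  have hLle : ∀ n, L ≤ f (x n) := fun n => ciInf_le hbdd n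
  have hc : CauchySeq (fun n => (x n : Z)) := by
    refine cauchySeq_of_le_tendsto_0' (fun n => f (x n) - L) ?_ ?_
    · intro n k hnk
      obtain ⟨j, rfl⟩ := Nat.exists_eq_add_of_le hnk
      have := hnm n j
      have := hLle (n+j)
      linarith
    · simpa using hlim.sub_const L
  obtain ⟨z, hz⟩ := cauchySeq_tendsto_of_complete hc
  have hzs : z ∈ s := hs.mem_of_tendsto hz (Filter.Eventually.of_forall fun n => (x n).2)
  have hfz : f z = L := tendsto_nhds_unique ((hf.tendsto z).comp hz) hlim
  have hzn : ∀ n, f z + dist (x n : Z) z ≤ f (x n) := by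
    intro n
    have h1 : Filter.Tendsto (fun k => f (x (k+n)) + dist (x n : Z) (x (k+n))) Filter.atTop
        (nhds (f z + dist (x n : Z) z)) := by
      have hz' := (Filter.tendsto_add_atTop_iff_nat n).2 hz
      exact ((hf.tendsto z).comp hz').add (tendsto_const_nhds.dist hz')
    refine le_of_tendsto h1 (Filter.Eventually.of_forall fun k => ?_)
    rw [add_comm k n]
    exact hnm n k
  refine ⟨z, hzs, hzn 0, fun w hw hw' => ?_⟩
  have h3 : ∀ n, 2 * f (x (n+1)) - f (x n) ≤ f w := by
    intro n
    rw [hx]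
    refine hg2 (x n) w hw ?_
    have := hzn n
    have := dist_triangle (x n : Z) z w
    linarith
  have h4 : 2 * L - L ≤ f w := by
    refine le_of_tendsto (((hlim.comp (Filter.tendsto_add_atTop_nat 1)).const_mul 2).sub hlim)
      (Filter.Eventually.of_forall h3)
  have h5 : dist z w ≤ 0 := by linarith
  exact (dist_le_zero.1 h5).symm

theorem aux_unif {Y : Type*} [NormedAddCommGroup Y] [NormedSpace ℝ Y] [CompleteSpace Y]
    (E : Set Y) (hE : IsClosed E) (e₀ d : Y) (ε δ : ℝ) (hε : 0 < ε)
    (h : ∀ e ∈ E, ‖e - e₀‖ ≤ δ → ∃ lam > (0:ℝ), ∀ t ∈ Set.Icc (0:ℝ) lam,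
        ∃ b : Y, ‖b‖ ≤ 1 ∧ e + t • (d + ε • b) ∈ E)
    (e : Y) (he : e ∈ E) (t : ℝ) (ht : 0 ≤ t) (hle : ‖e - e₀‖ + t * (‖d‖ + ε) ≤ δ) :
    ∃ b : Y, ‖b‖ ≤ 1 ∧ e + t • (d + ε • b) ∈ E := by
  let s : Set (ℝ × Y) := {p | p.1 ∈ Set.Icc 0 t ∧ e + p.1 • d + ε • p.2 ∈ E}
  have hs : IsClosed s := by
    refine IsClosed.inter (isClosed_Icc.preimage continuous_fst) (hE.preimage ?_)
    fun_prop
  obtain ⟨⟨σ, w⟩, hz, hz1, hz2⟩ := aux_ekeland s hs (fun p => - p.1) (by fun_prop) (-t)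
    (fun z hz => neg_le_neg hz.1.2) (0, 0) ⟨⟨le_rfl, ht⟩, by simpa using he⟩
  obtain ⟨⟨hσ0, hσt⟩, hmem⟩ := hz
  simp only at hσ0 hσt hmem
  have hw : ‖w‖ ≤ σ := by
    have h1 : dist ((0:ℝ), (0:Y)) (σ, w) ≤ σ := by simpa using hz1
    rw [Prod.dist_eq] at h1
    simpa using (le_max_right _ _).trans h1
  rcases hσt.eq_or_lt with rfl | hlt
  · rcases hσ0.eq_or_lt with h0 | h0
    · refine ⟨0, by simp, ?_⟩
      simpa [← h0] using he
    · refine ⟨σ⁻¹ • w, ?_, ?_⟩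
      · rw [norm_smul, norm_inv, Real.norm_of_nonneg hσ0]
        rw [inv_mul_le_iff₀ h0]; simpa using hw
      · convert hmem using 1
        rw [smul_add, smul_comm ε, smul_smul σ σ⁻¹, mul_inv_cancel₀ h0.ne', one_smul, add_assoc]
  · exfalso
    have hnear : ‖e + σ • d + ε • w - e₀‖ ≤ δ := by
      calc ‖e + σ • d + ε • w - e₀‖ = ‖(e - e₀) + σ • d + ε • w‖ := by congr 1; abel
        _ ≤ ‖e - e₀‖ + ‖σ • d‖ + ‖ε • w‖ := norm_add₃_le
        _ = ‖e - e₀‖ + σ * ‖d‖ + ε * ‖w‖ := by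
          rw [norm_smul, norm_smul, Real.norm_of_nonneg hσ0, Real.norm_of_nonneg hε.le]
        _ ≤ ‖e - e₀‖ + t * ‖d‖ + ε * t := by
          gcongr; exact hw.trans hσt
        _ ≤ δ := by linarith
    obtain ⟨lam, hlam, H⟩ := h _ hmem hnear
    have hτ : 0 < min lam (t - σ) := lt_min hlam (by linarith)
    obtain ⟨b, hb, hbE⟩ := H (min lam (t - σ)) ⟨hτ.le, min_le_left _ _⟩
    set τ := min lam (t - σ) with hτd
    have hτ2 : τ ≤ t - σ := min_le_right _ _
    have := hz2 (σ + τ, w + τ • b) ⟨⟨by simp only; linarith, by simp only; linarith⟩, by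
      convert hbE using 1
      simp only
      module⟩ (by
      have : dist (σ, w) (σ + τ, w + τ • b) ≤ τ := by
        rw [Prod.dist_eq]
        refine max_le ?_ ?_
        · simp [abs_of_pos hτ]
        · simp only [dist_self_add_right, norm_smul, Real.norm_of_nonneg hτ.le]
          nlinarith
      simp only
      linarith)
    have h1 := congrArg Prod.fst this
    simp only at h1
    linarith

/-- locally uniform tangent vectors -/
def auxC {Y : Type*} [NormedAddCommGroup Y] [NormedSpace ℝ Y] (E : Set Y) (e₀ : Y) (ε δ : ℝ) :
    Set Y :=
  {d | ∀ e ∈ E, ‖e - e₀‖ < δ → ∃ κ > (0:ℝ), ∃ lam > (0:ℝ), ∀ e' ∈ E, ‖e' - e‖ < κ →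
    ∀ t ∈ Set.Icc (0:ℝ) lam, ∃ b : Y, ‖b‖ ≤ 1 ∧ e' + t • (d + ε • b) ∈ E}

theorem auxC_zero {Y : Type*} [NormedAddCommGroup Y] [NormedSpace ℝ Y] (E : Set Y) (e₀ : Y)
    (ε δ : ℝ) : (0:Y) ∈ auxC E e₀ ε δ := by
  intro e _ _
  refine ⟨1, one_pos, 1, one_pos, fun e' he' _ t _ => ⟨0, by simp, by simpa using he'⟩⟩

theorem auxC_mem {Y : Type*} [NormedAddCommGroup Y] [NormedSpace ℝ Y] [CompleteSpace Y]
    (E : Set Y) (hE : IsClosed E) (e₀ d : Y) (ε δ : ℝ) (hε : 0 < ε)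
    (h : ∀ e ∈ E, ‖e - e₀‖ ≤ δ → ∃ lam > (0:ℝ), ∀ t ∈ Set.Icc (0:ℝ) lam,
        ∃ b : Y, ‖b‖ ≤ 1 ∧ e + t • (d + ε • b) ∈ E) : d ∈ auxC E e₀ ε δ := by
  intro e he hlt
  have hd : 0 < ‖d‖ + ε := by positivity
  refine ⟨(δ - ‖e - e₀‖) / 2, by linarith, (δ - ‖e - e₀‖) / 2 / (‖d‖ + ε),
    div_pos (by linarith) hd, fun e' he' hlt' t ht => ?_⟩
  refine aux_unif E hE e₀ d ε δ hε h e' he' t ht.1 ?_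
  have h1 : t * (‖d‖ + ε) ≤ (δ - ‖e - e₀‖) / 2 := (le_div_iff₀ hd).1 ht.2
  have h2 := norm_sub_le_norm_sub_add_norm_sub e' e e₀
  linarith

theorem auxC_convex {Y : Type*} [NormedAddCommGroup Y] [NormedSpace ℝ Y] (E : Set Y) (e₀ : Y)
    (ε δ : ℝ) (hε : 0 < ε) : Convex ℝ (auxC E e₀ ε δ) := by
  intro d₁ h₁ d₂ h₂ a b ha hb hab e he hlt
  obtain ⟨κ₁, hκ₁, l₁, hl₁, H₁⟩ := h₁ e he hlt
  obtain ⟨κ₂, hκ₂, l₂, hl₂, H₂⟩ := h₂ e he hlt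
  have hd : 0 < ‖d₁‖ + ε := by positivity
  refine ⟨min κ₁ (κ₂/2), by positivity, min (min l₁ l₂) (κ₂ / 2 / (‖d₁‖ + ε)), by positivity,
    fun e' he' hlt' t ht => ?_⟩
  obtain ⟨ht0, ht1⟩ := ht
  simp only [le_min_iff] at ht1
  obtain ⟨⟨ht1, ht2⟩, ht3⟩ := ht1
  rw [le_div_iff₀ hd] at ht3
  rw [lt_min_iff] at hlt'
  obtain ⟨b₁, hb₁, hE₁⟩ := H₁ e' he' hlt'.1 (t * a) ⟨by positivity, by nlinarith⟩
  have hn : ‖e' + (t * a) • (d₁ + ε • b₁) - e‖ < κ₂ := by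
    calc ‖e' + (t * a) • (d₁ + ε • b₁) - e‖ = ‖(e' - e) + (t * a) • (d₁ + ε • b₁)‖ := by
          congr 1; abel
      _ ≤ ‖e' - e‖ + ‖(t * a) • (d₁ + ε • b₁)‖ := norm_add_le _ _
      _ = ‖e' - e‖ + (t * a) * ‖d₁ + ε • b₁‖ := by
        rw [norm_smul, Real.norm_of_nonneg (by positivity : 0 ≤ t * a)]
      _ ≤ ‖e' - e‖ + (t * 1) * (‖d₁‖ + ε) := by
        gcongr
        · linarith
        · refine (norm_add_le _ _).trans ?_
          rw [norm_smul, Real.norm_of_nonneg hε.le]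
          nlinarith
      _ < κ₂ := by linarith [hlt'.2]
  obtain ⟨b₂, hb₂, hE₂⟩ := H₂ _ hE₁ hn (t * b) ⟨by positivity, by nlinarith⟩
  refine ⟨a • b₁ + b • b₂, ?_, ?_⟩
  · refine (norm_add_le _ _).trans ?_
    rw [norm_smul, norm_smul, Real.norm_of_nonneg ha, Real.norm_of_nonneg hb]
    nlinarith
  · convert hE₂ using 1
    module

theorem aux_trans {Y : Type*} [NormedAddCommGroup Y] [NormedSpace ℝ Y] [CompleteSpace Y]
    (P Q E F : Set Y) (hE : IsClosed E) (hF : IsClosed F) (e₀ : Y) (K ρ σ δ h : ℝ)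
    (hρ : 0 < ρ) (hσ : 0 < σ) (hσK : σ * (K + ρ / 6) ≤ ρ / 2) (hh : h + σ⁻¹ * h < δ)
    (hP : ∀ p ∈ P, ‖p‖ ≤ K) (hQ : ∀ p ∈ Q, ‖p‖ ≤ K)
    (hPE : P ⊆ auxC E e₀ (ρ / 6) δ) (hQF : Q ⊆ auxC F e₀ (ρ / 6) δ)
    (hball : closedBall (0:Y) ρ ⊆ closure (P - Q))
    (a₀ b₀ : Y) (ha₀ : a₀ ∈ E) (hb₀ : b₀ ∈ F) (ha : ‖a₀ - e₀‖ ≤ h) (hb : ‖b₀ - e₀‖ ≤ h)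
    (hab : ‖a₀ - b₀‖ ≤ h) : (E ∩ F).Nonempty := by
  have hσi : 0 < σ⁻¹ := inv_pos.2 hσ
  obtain ⟨⟨a, b⟩, ⟨haE, hbF⟩, h1, h2⟩ := aux_ekeland (E ×ˢ F) (hE.prod hF)
    (fun p => σ⁻¹ * ‖p.1 - p.2‖) (by fun_prop) 0 (fun z _ => by positivity) (a₀, b₀) ⟨ha₀, hb₀⟩
  simp only at haE hbF h1 h2
  by_cases hne : a = b
  · exact ⟨a, haE, hne ▸ hbF⟩
  exfalso
  have hdist : dist (a₀, b₀) (a, b) ≤ σ⁻¹ * h := by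
    have : 0 ≤ σ⁻¹ * ‖a - b‖ := by positivity
    have : σ⁻¹ * ‖a₀ - b₀‖ ≤ σ⁻¹ * h := by gcongr
    linarith
  rw [Prod.dist_eq, max_le_iff] at hdist
  have hae : ‖a - e₀‖ < δ := by
    have := norm_sub_le_norm_sub_add_norm_sub a a₀ e₀
    have h3 := hdist.1
    simp only [dist_comm a₀ a, dist_eq_norm a a₀] at h3
    linarith
  have hbe : ‖b - e₀‖ < δ := by
    have := norm_sub_le_norm_sub_add_norm_sub b b₀ e₀
    have h3 := hdist.2
    simp only [dist_comm b₀ b, dist_eq_norm b b₀] at h3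
    linarith
  have hn : 0 < ‖a - b‖ := norm_pos_iff.2 (sub_ne_zero.2 hne)
  set N := ‖a - b‖ with hN
  have hu : -(ρ / N) • (a - b) ∈ closure (P - Q) := by
    refine hball ?_
    rw [mem_closedBall_zero_iff, norm_smul, norm_neg, Real.norm_of_nonneg (by positivity), ← hN]
    rw [div_mul_cancel₀ _ hn.ne']
  obtain ⟨_, ⟨p, hp, q, hq, rfl⟩, hpq⟩ := Metric.mem_closure_iff.1 hu (ρ / 6) (by positivity)
  simp only at hpq
  rw [dist_comm, dist_eq_norm] at hpq
  obtain ⟨κ₁, hκ₁, l₁, hl₁, H₁⟩ := hPE hp a haE hae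
  obtain ⟨κ₂, hκ₂, l₂, hl₂, H₂⟩ := hQF hq b hbF hbe
  obtain ⟨t, ht0, ht1, ht2, ht3⟩ : ∃ t : ℝ, 0 < t ∧ t ≤ l₁ ∧ t ≤ l₂ ∧ t ≤ N / ρ :=
    ⟨min (min l₁ l₂) (N / ρ), by positivity, (min_le_left _ _).trans (min_le_left _ _),
      (min_le_left _ _).trans (min_le_right _ _), min_le_right _ _⟩
  obtain ⟨b₁, hb₁, hE₁⟩ := H₁ a haE (by simpa using hκ₁) t ⟨ht0.le, ht1⟩
  obtain ⟨b₂, hb₂, hF₂⟩ := H₂ b hbF (by simpa using hκ₂) t ⟨ht0.le, ht2⟩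
  have hstep : ∀ v c : Y, ‖v‖ ≤ K → ‖c‖ ≤ 1 → ‖t • (v + (ρ / 6) • c)‖ ≤ t * (K + ρ / 6) := by
    intro v c hv hc
    rw [norm_smul, Real.norm_of_nonneg ht0.le]
    gcongr
    refine (norm_add_le _ _).trans ?_
    rw [norm_smul, Real.norm_of_nonneg (by positivity : 0 ≤ ρ / 6)]
    nlinarith
  have hd' : dist (a, b) (a + t • (p + (ρ / 6) • b₁), b + t • (q + (ρ / 6) • b₂))
      ≤ t * (K + ρ / 6) := by
    rw [Prod.dist_eq]
    refine max_le ?_ ?_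
    · simpa using hstep p b₁ (hP p hp) hb₁
    · simpa using hstep q b₂ (hQ q hq) hb₂
  have hf' : ‖a + t • (p + (ρ / 6) • b₁) - (b + t • (q + (ρ / 6) • b₂))‖ ≤ N - t * ρ / 2 := by
    have e1 : a + t • (p + (ρ / 6) • b₁) - (b + t • (q + (ρ / 6) • b₂)) =
        (1 - t * (ρ / N)) • (a - b) + t • (p - q - -(ρ / N) • (a - b)) +
          ((t * (ρ / 6)) • b₁ - (t * (ρ / 6)) • b₂) := by module
    have h01 : 0 ≤ 1 - t * (ρ / N) := by
      have : t * (ρ / N) ≤ (N / ρ) * (ρ / N) := by gcongr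
      have h' : (N / ρ) * (ρ / N) = 1 := by field_simp
      linarith
    have n1 : ‖(1 - t * (ρ / N)) • (a - b)‖ = N - t * ρ := by
      rw [norm_smul, Real.norm_of_nonneg h01, ← hN]
      field_simp
    have n2 : ‖t • (p - q - -(ρ / N) • (a - b))‖ ≤ t * (ρ / 6) := by
      rw [norm_smul, Real.norm_of_nonneg ht0.le]
      gcongr
    have n3 : ∀ c : Y, ‖c‖ ≤ 1 → ‖(t * (ρ / 6)) • c‖ ≤ t * (ρ / 6) := by
      intro c hc
      rw [norm_smul, Real.norm_of_nonneg (by positivity)]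
      exact mul_le_of_le_one_right (by positivity) hc
    have n4 := n3 b₁ hb₁
    have n5 := n3 b₂ hb₂
    rw [e1]
    have m1 := norm_add₃_le (a := (1 - t * (ρ / N)) • (a - b))
      (b := t • (p - q - -(ρ / N) • (a - b)))
      (c := ((t * (ρ / 6)) • b₁ - (t * (ρ / 6)) • b₂))
    have m2 := norm_sub_le ((t * (ρ / 6)) • b₁) ((t * (ρ / 6)) • b₂)
    linarith
  have hfin := h2 (a + t • (p + (ρ / 6) • b₁), b + t • (q + (ρ / 6) • b₂)) ⟨hE₁, hF₂⟩ (by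
    simp only
    have k1 : σ⁻¹ * ‖a + t • (p + (ρ / 6) • b₁) - (b + t • (q + (ρ / 6) • b₂))‖ ≤
        σ⁻¹ * (N - t * ρ / 2) := by gcongr
    have k2 : t * (K + ρ / 6) ≤ σ⁻¹ * (t * ρ / 2) := by
      rw [← div_eq_inv_mul, le_div_iff₀ hσ]
      nlinarith
    nlinarith)
  rw [Prod.mk.injEq] at hfin
  rw [hfin.1, hfin.2, ← hN] at hf'
  have : 0 < t * ρ := by positivity
  linarith

theorem aux_interior {Y : Type*} [NormedAddCommGroup Y] [NormedSpace ℝ Y] [CompleteSpace Y]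
    (V : Set Y) (hV : IsClosed V) (hVc : Convex ℝ V) (L : Submodule ℝ Y) (p q c : Y) (r : ℝ)
    (hr : 0 < r) (hL : ∀ l ∈ L, ‖l‖ < r → c + l ∈ V)
    (hpq : ∀ s ∈ Set.Icc (0:ℝ) 1, ∀ t ∈ Set.Icc (0:ℝ) 1, s • p - t • q ∈ V)
    (htop : ∀ y : Y, ∃ l ∈ L, ∃ α β : ℝ, y = l + α • p + β • q) :
    (interior V).Nonempty := by
  set w : Y := (1/2 : ℝ) • c + (1/4 : ℝ) • p - (1/4 : ℝ) • q with hw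
  let g : ℕ → Y → Y := fun n y => w + ((n:ℝ) + 1)⁻¹ • y
  have hg : ∀ n, Continuous (g n) := fun n => by fun_prop
  have hgo : ∀ n, IsOpenMap (g n) := fun n => by
    have h1 : IsOpenMap (fun y : Y => ((n:ℝ) + 1)⁻¹ • y) := isOpenMap_smul₀ (by positivity)
    exact (isOpenMap_add_left w).comp h1
  obtain ⟨n, hn⟩ := nonempty_interior_of_iUnion_of_closed (f := fun n => g n ⁻¹' V)
    (fun n => hV.preimage (hg n)) (by
      rw [Set.eq_univ_iff_forall]
      intro y
      obtain ⟨l, hl, α, β, rfl⟩ := htop y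
      obtain ⟨n, hn⟩ := exists_nat_gt (4 * |α| + 4 * |β| + 2 * ‖l‖ / r)
      refine Set.mem_iUnion.2 ⟨n, ?_⟩
      have hN : (0:ℝ) < (n:ℝ) + 1 := by positivity
      set M : ℝ := (n:ℝ) + 1 with hM
      have hlr : 0 ≤ 2 * ‖l‖ / r := by positivity
      have hα := abs_nonneg α
      have hβ := abs_nonneg β
      have b1 : |2 * α / M| ≤ 1 / 2 := by
        rw [abs_div, abs_of_pos hN, div_le_iff₀ hN, abs_mul, abs_two]; linarith
      have b2 : |2 * β / M| ≤ 1 / 2 := by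
        rw [abs_div, abs_of_pos hN, div_le_iff₀ hN, abs_mul, abs_two]; linarith
      have b3 : ‖(2 / M) • l‖ < r := by
        rw [norm_smul, Real.norm_of_nonneg (by positivity), div_mul_eq_mul_div, div_lt_iff₀ hN]
        have : 2 * ‖l‖ / r < M := by linarith
        rw [div_lt_iff₀ hr] at this
        linarith
      rw [abs_le] at b1 b2
      have m1 := hL _ (L.smul_mem (2 / M) hl) b3
      have m2 := hpq (1 / 2 + 2 * α / M) ⟨by linarith, by linarith⟩ (1 / 2 - 2 * β / M)
        ⟨by linarith, by linarith⟩
      have := hVc m1 m2 (by norm_num : (0:ℝ) ≤ 1/2) (by norm_num : (0:ℝ) ≤ 1/2) (by norm_num)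
      show g n _ ∈ V
      convert this using 1
      simp only [g, hw, ← hM]
      module)
  obtain ⟨y, hy⟩ := hn
  refine ⟨g n y, ?_⟩
  refine mem_interior.2 ⟨g n '' interior (g n ⁻¹' V), ?_, hgo n _ isOpen_interior, ⟨y, hy, rfl⟩⟩
  rintro _ ⟨x, hx, rfl⟩
  have hx' : x ∈ g n ⁻¹' V := interior_subset hx
  exact hx'

/-- Abstract Lagrange multiplier rule. -/
theorem abstract_lagrange_multiplier_rule
    {X : Type*} [NormedAddCommGroup X] [NormedSpace ℝ X] [CompleteSpace X]
    (φ : X → EReal) (hφbot : ∀ x, φ x ≠ ⊥) (hlsc : LowerSemicontinuous φ)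
    (hproper : ∃ x, φ x ≠ ⊤)
    (S : Set X) (hS : IsClosed S)
    (xbar : X) (hxbar : xbar ∈ S) (hmin : ∀ x ∈ S, φ xbar ≤ φ x)
    (r : ℝ) (hr : φ xbar = (r : EReal))
    (DS : Set X) (hDS : IsUniformTangentSet S xbar DS)
    (DR : Set (X × ℝ))
    (hDR : IsUniformTangentSet {p : X × ℝ | φ p.1 ≤ (p.2 : EReal)} (xbar, r) DR)
    (hqs : Quasisolid ((DS ×ˢ Set.Icc (-1 : ℝ) 0) - DR)) :
    ∃ (ξ : X →L[ℝ] ℝ) (η : ℝ),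
      (ξ ≠ 0 ∨ η ≠ 0) ∧ (η = 0 ∨ η = 1) ∧
      (∀ v ∈ DS, ξ v ≤ 0) ∧
      (∀ p ∈ DR, 0 ≤ ξ p.1 + η * p.2) := by
  classical
  by_contra hno
  set PS : Set (X × ℝ) := (insert 0 DS) ×ˢ Set.Icc (-1 : ℝ) 0 with hPS
  set QR : Set (X × ℝ) := insert 0 DR with hQR
  set V : Set (X × ℝ) := closure (convexHull ℝ (PS - QR)) with hVdef
  have hVcl : IsClosed V := isClosed_closure
  have hVc : Convex ℝ V := (convex_convexHull ℝ _).closure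
  have hsubV : PS - QR ⊆ V := (subset_convexHull ℝ _).trans subset_closure
  have h0QR : (0 : X × ℝ) ∈ QR := Set.mem_insert _ _
  have key : ∀ f : X × ℝ →L[ℝ] ℝ, (∀ y ∈ PS - QR, f y ≤ 0) → f = 0 := by
    intro f hf
    by_contra hf0
    apply hno
    set ξ : X →L[ℝ] ℝ := f.comp (ContinuousLinearMap.inl ℝ X ℝ) with hξ
    set η : ℝ := f (0, 1) with hη
    have hdec : ∀ (v : X) (s : ℝ), f (v, s) = ξ v + η * s := by
      intro v s
      have e : ((v, s) : X × ℝ) = (v, 0) + s • ((0 : X), (1:ℝ)) := by simp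
      rw [e, map_add, map_smul, hξ, hη]
      simp [mul_comm]
    have hfP : ∀ y ∈ PS, f y ≤ 0 := fun y hy => by
      have := hf (y - 0) (Set.sub_mem_sub hy h0QR)
      simpa using this
    have hηn : 0 ≤ η := by
      have := hfP (0, -1) ⟨Set.mem_insert _ _, by norm_num⟩
      rw [hdec] at this
      simp at this
      linarith
    have hξS : ∀ v ∈ DS, ξ v ≤ 0 := fun v hv => by
      have := hfP (v, 0) ⟨Set.mem_insert_of_mem _ hv, by norm_num⟩
      rw [hdec] at this
      simpa using this
    have hR : ∀ p ∈ DR, 0 ≤ ξ p.1 + η * p.2 := fun p hp => by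
      have := hf (0 - p) (Set.sub_mem_sub ⟨Set.mem_insert _ _, by norm_num⟩
        (Set.mem_insert_of_mem _ hp))
      rw [zero_sub, map_neg] at this
      rw [← hdec]
      simpa using this
    rcases hηn.eq_or_lt with h0 | h0
    · refine ⟨ξ, η, Or.inl ?_, Or.inl h0.symm, hξS, hR⟩
      intro hx
      apply hf0
      ext1
      · exact hx
      · ext
        simp [← hη, ← h0]
    · refine ⟨η⁻¹ • ξ, 1, Or.inr one_ne_zero, Or.inr rfl, fun v hv => ?_, fun p hp => ?_⟩
      · simp only [ContinuousLinearMap.smul_apply, smul_eq_mul]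
        exact mul_nonpos_of_nonneg_of_nonpos (by positivity) (hξS v hv)
      · simp only [ContinuousLinearMap.smul_apply, smul_eq_mul]
        have : η⁻¹ * ξ p.1 + 1 * p.2 = η⁻¹ * (ξ p.1 + η * p.2) := by field_simp
        rw [this]
        exact mul_nonneg (by positivity) (hR p hp)
  -- nonempty interior
  have hint : (interior V).Nonempty := by
    obtain ⟨y₀, hy₀, z, hz, ρ, hρ, hball⟩ := hqs
    set A : Set (X × ℝ) := (DS ×ˢ Set.Icc (-1 : ℝ) 0) - DR with hA
    set L : Submodule ℝ (X × ℝ) := (Submodule.span ℝ ((· - y₀) '' A)).topologicalClosure with hLd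
    have hLcl : IsClosed (L : Set (X × ℝ)) := Submodule.isClosed_topologicalClosure _
    have hAL : ∀ y ∈ A, y - y₀ ∈ L := fun y hy =>
      Submodule.le_topologicalClosure _ (Submodule.subset_span ⟨y, hy, rfl⟩)
    have hAne : A.Nonempty := by
      have : (convexHull ℝ A).Nonempty := closure_nonempty_iff.1 ⟨y₀, hy₀⟩
      exact convexHull_nonempty_iff.1 this
    obtain ⟨_, ⟨v₀, s₀⟩, ⟨hv₀, hs₀⟩, q, hq, -⟩ := hAne
    simp only at hv₀ hs₀
    have hPL : ∀ p ∈ DS ×ˢ Set.Icc (-1 : ℝ) 0, p - (v₀, 0) ∈ L := fun p hp => by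
      have h1 := hAL (p - q) (Set.sub_mem_sub hp hq)
      have h2 := hAL ((v₀, 0) - q) (Set.sub_mem_sub ⟨hv₀, by norm_num⟩ hq)
      have := L.sub_mem h1 h2
      convert this using 1
      abel
    have hQL : ∀ p ∈ DR, p - q ∈ L := fun p hp => by
      have h1 := hAL ((v₀, 0) - p) (Set.sub_mem_sub ⟨hv₀, by norm_num⟩ hp)
      have h2 := hAL ((v₀, 0) - q) (Set.sub_mem_sub ⟨hv₀, by norm_num⟩ hq)
      have := L.sub_mem h2 h1
      convert this using 1
      abel
    set N : Submodule ℝ (X × ℝ) := L ⊔ Submodule.span ℝ {((v₀, 0) : X × ℝ), q} with hN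
    have hLN : L ≤ N := le_sup_left
    have hpN : ((v₀, 0) : X × ℝ) ∈ N :=
      (le_sup_right : _ ≤ N) (Submodule.subset_span (by simp))
    have hqN : q ∈ N := (le_sup_right : _ ≤ N) (Submodule.subset_span (by simp))
    have hPN : ∀ p ∈ PS, p ∈ N := by
      rintro ⟨v, s⟩ ⟨hv, hs⟩
      simp only at hv hs
      rcases hv with rfl | hv
      · have := hPL (v₀, s) ⟨hv₀, hs⟩
        simp at this
        exact hLN this
      · have := N.add_mem (hLN (hPL (v, s) ⟨hv, hs⟩)) hpN
        simpa using this
    have hQN : ∀ p ∈ QR, p ∈ N := by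
      rintro p (rfl | hp)
      · exact N.zero_mem
      · have := N.add_mem (hLN (hQL p hp)) hqN
        simpa using this
    have hNcl : IsClosed (N : Set (X × ℝ)) := by
      haveI : FiniteDimensional ℝ (Submodule.span ℝ {((v₀, 0) : X × ℝ), q}) :=
        FiniteDimensional.span_of_finite ℝ (Set.toFinite _)
      exact Submodule.isClosed_sup_finiteDimensional _ _ hLcl
    have hNtop : ∀ y, y ∈ N := by
      intro y
      by_contra hy
      obtain ⟨f, u, hf1, hf2⟩ := geometric_hahn_banach_closed_point N.convex hNcl hy
      have hu : 0 < u := by simpa using hf1 0 N.zero_mem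
      have hfN : ∀ x ∈ N, f x ≤ 0 := by
        intro x hx
        by_contra hpos
        push Not at hpos
        have := hf1 ((u / f x) • x) (N.smul_mem _ hx)
        rw [map_smul, smul_eq_mul, div_mul_cancel₀ _ hpos.ne'] at this
        exact lt_irrefl _ this
      have hf0 := key f (by
        rintro _ ⟨p, hp, p', hp', rfl⟩
        exact hfN _ (N.sub_mem (hPN p hp) (hQN p' hp')))
      rw [hf0] at hf2
      simp at hf2
      linarith
    have hzL : z ∈ L := by
      have : closure (convexHull ℝ ((· - y₀) '' A)) ⊆ L := by
        refine closure_minimal (convexHull_min ?_ L.convex) hLcl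
        rintro _ ⟨y, hy, rfl⟩
        exact hAL y hy
      exact this hz
    have hAA : A ⊆ PS - QR := Set.sub_subset_sub
      (Set.prod_mono (Set.subset_insert _ _) subset_rfl) (Set.subset_insert _ _)
    have hshift : ∀ x ∈ closure (convexHull ℝ ((· - y₀) '' A)), y₀ + x ∈ V := by
      have : closure (convexHull ℝ ((· - y₀) '' A)) ⊆ (fun x => y₀ + x) ⁻¹' V := by
        refine closure_minimal (convexHull_min ?_ (hVc.translate_preimage_right y₀))
          (hVcl.preimage (by fun_prop))
        rintro _ ⟨y, hy, rfl⟩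
        simpa using hsubV (hAA hy)
      exact this
    refine aux_interior V hVcl hVc L (v₀, 0) q (y₀ + z) ρ hρ ?_ ?_ ?_
    · intro l hl hlt
      rw [add_assoc]
      refine hshift _ (hball ⟨L.add_mem hzL hl, ?_⟩)
      simpa [mem_ball, dist_eq_norm] using hlt
    · intro s hs t ht
      rw [hVdef, convexHull_sub]
      refine subset_closure (Set.sub_mem_sub ?_ ?_)
      · exact (convex_convexHull ℝ PS).smul_mem_of_zero_mem
          (subset_convexHull ℝ _ ⟨Set.mem_insert _ _, by norm_num⟩)
          (subset_convexHull ℝ _ ⟨Set.mem_insert_of_mem _ hv₀, by norm_num⟩) hs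
      · exact (convex_convexHull ℝ QR).smul_mem_of_zero_mem
          (subset_convexHull ℝ _ h0QR)
          (subset_convexHull ℝ _ (Set.mem_insert_of_mem _ hq)) ht
    · intro y
      obtain ⟨l, hl, x, hx, rfl⟩ := Submodule.mem_sup.1 (hNtop y)
      obtain ⟨α, β, rfl⟩ := Submodule.mem_span_pair.1 hx
      exact ⟨l, hl, α, β, by rw [add_assoc]⟩
  have h0int : (0 : X × ℝ) ∈ interior V := by
    by_contra h0
    obtain ⟨f, hf⟩ := geometric_hahn_banach_open_point hVc.interior isOpen_interior h0
    rw [map_zero] at hf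
    have hfV : ∀ y ∈ V, f y ≤ 0 := by
      have h1 : closure (interior V) ⊆ {y | f y ≤ 0} :=
        closure_minimal (fun y hy => (hf y hy).le) (isClosed_le f.continuous continuous_const)
      rw [hVc.closure_interior_eq_closure_of_nonempty_interior hint, hVcl.closure_eq] at h1
      exact h1
    obtain ⟨y, hy⟩ := hint
    have := hf y hy
    rw [key f fun y hy => hfV y (hsubV hy)] at this
    simp at this
  obtain ⟨ρ, hρ, hball⟩ := Metric.nhds_basis_closedBall.mem_iff.1 (mem_interior_iff_mem_nhds.1 h0int)
  rw [hVdef, convexHull_sub] at hball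
  have hPSb : Bornology.IsBounded (convexHull ℝ PS) :=
    isBounded_convexHull.2 ((hDS.1.insert 0).prod (isBounded_Icc _ _))
  have hQRb : Bornology.IsBounded (convexHull ℝ QR) := isBounded_convexHull.2 (hDR.1.insert 0)
  obtain ⟨K, hK⟩ := (hPSb.union hQRb).exists_norm_le
  have hK0 : 0 ≤ K := (norm_nonneg _).trans (hK 0 (Or.inr (subset_convexHull ℝ _ h0QR)))
  obtain ⟨δ₁, hδ₁, H₁⟩ := hDS.2 (ρ / 6) (by positivity)
  obtain ⟨δ₂, hδ₂, H₂⟩ := hDR.2 (ρ / 6) (by positivity)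
  have hEcl : IsClosed {p : X × ℝ | φ p.1 ≤ (p.2 : EReal)} := by
    have h1 := hlsc.isClosed_epigraph
    exact h1.preimage (f := fun p : X × ℝ => (p.1, (p.2 : EReal)))
      (continuous_fst.prodMk (continuous_coe_real_ereal.comp continuous_snd))
  set σ : ℝ := ρ / 2 / (K + ρ / 6) with hσ
  have hσ0 : 0 < σ := by positivity
  set δ := min δ₁ δ₂ with hδ
  have hδ0 : 0 < δ := lt_min hδ₁ hδ₂
  set h : ℝ := δ / 2 / (1 + σ⁻¹) with hh
  have hh0 : 0 < h := by positivity
  have hhδ : h + σ⁻¹ * h < δ := by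
    have : h * (1 + σ⁻¹) = δ / 2 := div_mul_cancel₀ _ (by positivity)
    linarith
  have hSt : IsClosed (S ×ˢ Set.Iic (r - h)) := hS.prod isClosed_Iic
  obtain ⟨⟨x, s⟩, ⟨hxS, hs⟩, hxF⟩ := aux_trans (convexHull ℝ PS) (convexHull ℝ QR)
    (S ×ˢ Set.Iic (r - h)) {p : X × ℝ | φ p.1 ≤ (p.2 : EReal)} hSt hEcl (xbar, r) K ρ σ δ h
    hρ hσ0 (by rw [hσ, div_mul_cancel₀ _ (by positivity)]) hhδ
    (fun p hp => hK p (Or.inl hp)) (fun p hp => hK p (Or.inr hp))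
    (by
      refine convexHull_min ?_ (auxC_convex _ _ _ _ (by positivity))
      rintro ⟨v, τ⟩ ⟨hv, hτ⟩
      simp only at hv hτ
      refine auxC_mem _ hSt _ _ _ _ (by positivity) ?_
      rintro ⟨x, s⟩ ⟨hx, hs⟩ hn
      simp only [Set.mem_Iic] at hx hs
      have hn1 : ‖x - xbar‖ ≤ δ₁ :=
        ((norm_fst_le ((x, s) - (xbar, r) : X × ℝ)).trans hn).trans (min_le_left _ _)
      rcases hv with rfl | hv
      · refine ⟨1, one_pos, fun t ht => ⟨0, by simp, ?_, ?_⟩⟩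
        · simpa using hx
        · have := ht.1
          have := hτ.2
          simp
          nlinarith
      · obtain ⟨lam, hlam, H⟩ := H₁ v hv x hx hn1
        refine ⟨lam, hlam, fun t ht => ?_⟩
        obtain ⟨b, hb, hbE⟩ := H t ht
        refine ⟨(b, 0), by simpa [Prod.norm_def] using hb, ?_, ?_⟩
        · simpa using hbE
        · have := ht.1
          have := hτ.2
          simp
          nlinarith)
    (by
      refine convexHull_min ?_ (auxC_convex _ _ _ _ (by positivity))
      rintro p (rfl | hp)
      · exact auxC_zero _ _ _ _
      · exact auxC_mem _ hEcl _ _ _ _ (by positivity)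
          fun e he hn => H₂ p hp e he (hn.trans (min_le_right _ _)))
    hball (xbar, r - h) (xbar, r) ⟨hxbar, by simp⟩ (by simp [hr])
    (by simp [Prod.norm_def, abs_of_pos hh0, hh0.le]) (by simpa using hh0.le)
    (by simp [Prod.norm_def, abs_of_pos hh0, hh0.le])
  simp only [Set.mem_Iic, Set.mem_setOf_eq] at hxS hs hxF
  have h1 : (r : EReal) ≤ (s : EReal) := hr ▸ (hmin x hxS).trans hxF
  have h2 : r ≤ s := EReal.coe_le_coe_iff.1 h1
  linarith
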